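/- Let σ : Ω → H be holomorphic and k-nondegenerate, k ≥ 1, and define the curvature coefficient of the k-jet bundle of the line bundle K(z) := ∂/∂z̄ ( G_k⁻¹ · ∂G_k/∂z )(z), a (k+1)×(k+1) matrix with entries indexed by 0,…,k. Then for every z ∈ Ω: K(z)_{i,j} = 0 whenever 0 ≤ j ≤ k−1 (all columns except the last vanish), and the bottom-right entry satisfies K(z)_{k,k} = ∂²(log det G_k)/∂z∂z̄ (z) = det G_{k−1}(z)·det G_{k+1}(z)/(det G_k(z))². -/

import Mathlib

open Matrix

noncomputable section

/-- Wirtinger derivative `∂g/∂z := (1/2)(∂g/∂x − i·∂g/∂y)`. -/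
def Dz {E : Type*} [NormedAddCommGroup E] [NormedSpace ℂ E] (g : ℂ → E) (z : ℂ) : E :=
  (1 / 2 : ℂ) • (fderiv ℝ g z 1 - Complex.I • fderiv ℝ g z Complex.I)

/-- Wirtinger derivative `∂g/∂z̄ := (1/2)(∂g/∂x + i·∂g/∂y)`. -/
def Dzbar {E : Type*} [NormedAddCommGroup E] [NormedSpace ℂ E] (g : ℂ → E) (z : ℂ) : E :=
  (1 / 2 : ℂ) • (fderiv ℝ g z 1 + Complex.I • fderiv ℝ g z Complex.I)

/-- Entrywise Wirtinger derivative `∂/∂z` of a matrix-valued function. -/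
def mDz {ι : Type*} (M : ℂ → Matrix ι ι ℂ) (z : ℂ) : Matrix ι ι ℂ :=
  Matrix.of fun i j => Dz (fun w => M w i j) z

/-- Entrywise Wirtinger derivative `∂/∂z̄` of a matrix-valued function. -/
def mDzbar {ι : Type*} (M : ℂ → Matrix ι ι ℂ) (z : ℂ) : Matrix ι ι ℂ :=
  Matrix.of fun i j => Dzbar (fun w => M w i j) z

variable {H : Type*} [NormedAddCommGroup H] [InnerProductSpace ℂ H] [CompleteSpace H]

/-- `⟪x, y⟫` is the Mathlib inner product (conjugate-linear in the first argument);
it equals the paper's inner product `⟨y, x⟩`, which is linear in the first argument. -/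
local notation "⟪" x ", " y "⟫" => (inner ℂ x y : ℂ)

/-- `lG σ N z` is the `N×N` Gram matrix of `σ(z), σ′(z), …, σ^{(N−1)}(z)`; its `(i,j)` entry is
`⟪σ^{(i)}(z), σ^{(j)}(z)⟫ = ⟨σ^{(j)}(z), σ^{(i)}(z)⟩_paper`.  The jet Gram matrix `G_k` of the
paper is `lG σ (k+1)`. -/
def lG (σ : ℂ → H) (N : ℕ) (z : ℂ) : Matrix (Fin N) (Fin N) ℂ :=
  Matrix.of fun i j => ⟪iteratedDeriv (i : ℕ) σ z, iteratedDeriv (j : ℕ) σ z⟫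

/-!
Write `G` for the jet Gram matrix and `K` for its curvature `∂̄(G⁻¹ ∂G)`. Differentiating
`G (G⁻¹ ∂G) = ∂G` gives `G K = ∂̄∂G - ∂̄G G⁻¹ ∂G`. Since `σ` is holomorphic, `∂` and `∂̄` raise the
order of the derivative in one slot of `⟨σ⁽ʲ⁾, σ⁽ⁱ⁾⟩`, so the `(i, j)` entry of the right-hand side
is the inner product of the components of `σ⁽ʲ⁺¹⁾` and `σ⁽ⁱ⁺¹⁾` orthogonal to `σ, …, σ⁽ᵏ⁾`. It
vanishes unless `i = j = k`, and in that case it is `det G_{k+1} / det G_k` by the Schur complement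
formula. Hence only the last column of `K` survives, its bottom entry is `(G⁻¹)_{kk}` times that
quotient, and it is also the trace of `K`, which is `∂̄∂ log det G` by Jacobi's formula.
-/

open scoped Topology ComplexConjugate

section WirtingerCalculus

variable {E : Type*} [NormedAddCommGroup E] {z : ℂ}

theorem Dzbar_congr [NormedSpace ℂ E] {f g : ℂ → E} (h : f =ᶠ[𝓝 z] g) :
    Dzbar f z = Dzbar g z := by
  simp only [Dzbar, h.fderiv_eq]

theorem Dzbar_fun_sum [NormedSpace ℂ E] {α : Type*} {s : Finset α} {f : α → ℂ → E}
    (hf : ∀ a ∈ s, DifferentiableAt ℝ (f a) z) :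
    Dzbar (fun w => ∑ a ∈ s, f a w) z = ∑ a ∈ s, Dzbar (f a) z := by
  simp only [Dzbar, fderiv_fun_sum hf, _root_.sum_apply, Finset.smul_sum, smul_add,
    Finset.sum_add_distrib]

theorem Dzbar_fun_mul {f g : ℂ → ℂ} (hf : DifferentiableAt ℝ f z) (hg : DifferentiableAt ℝ g z) :
    Dzbar (fun w => f w * g w) z = Dzbar f z * g z + f z * Dzbar g z := by
  simp only [Dzbar, fderiv_fun_mul hf hg, _root_.add_apply, _root_.smul_apply, smul_eq_mul]
  ring

theorem Dz_log {f : ℂ → ℂ} (hf : DifferentiableAt ℝ f z) (hz : f z ∈ Complex.slitPlane) :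
    Dz (fun w => Complex.log (f w)) z = (f z)⁻¹ * Dz f z := by
  have hlog : HasFDerivAt (fun w => Complex.log (f w)) ((f z)⁻¹ • fderiv ℝ f z) z := by
    simpa using! (Complex.hasStrictFDerivAt_log_real hz).hasFDerivAt.comp z hf.hasFDerivAt
  simp only [Dz, hlog.fderiv, _root_.smul_apply, smul_eq_mul]
  ring

variable [InnerProductSpace ℂ E] {f g : ℂ → E} {f' g' : E}

theorem fderiv_inner_apply_of_hasDerivAt (hf : HasDerivAt f f' z) (hg : HasDerivAt g g' z)
    (v : ℂ) :
    fderiv ℝ (fun w => ⟪f w, g w⟫) z v = v * ⟪f z, g'⟫ + conj v * ⟪f', g z⟫ := by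
  have hfg := (hf.hasFDerivAt.restrictScalars ℝ).inner ℂ (hg.hasFDerivAt.restrictScalars ℝ)
  simp [hfg.fderiv, inner_smul_left, inner_smul_right]

theorem Dz_inner (hf : HasDerivAt f f' z) (hg : HasDerivAt g g' z) :
    Dz (fun w => ⟪f w, g w⟫) z = ⟪f z, g'⟫ := by
  simp only [Dz, fderiv_inner_apply_of_hasDerivAt hf hg, smul_eq_mul, map_one, Complex.conj_I]
  linear_combination (1 / 2) * (⟪f', g z⟫ - ⟪f z, g'⟫) * Complex.I_mul_I

theorem Dzbar_inner (hf : HasDerivAt f f' z) (hg : HasDerivAt g g' z) :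
    Dzbar (fun w => ⟪f w, g w⟫) z = ⟪f', g z⟫ := by
  simp only [Dzbar, fderiv_inner_apply_of_hasDerivAt hf hg, smul_eq_mul, map_one, Complex.conj_I]
  linear_combination (1 / 2) * (⟪f z, g'⟫ - ⟪f', g z⟫) * Complex.I_mul_I

end WirtingerCalculus

section MatrixCalculus

variable {𝕜 F 𝔸 ι : Type*} [NontriviallyNormedField 𝕜] [NormedAddCommGroup F] [NormedSpace 𝕜 F]
  [NormedCommRing 𝔸] [NormedAlgebra 𝕜 𝔸] [Fintype ι]
  {M N : F → Matrix ι ι 𝔸} {x : F}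

theorem differentiableAt_matrix_mul (hM : ∀ i j, DifferentiableAt 𝕜 (fun w => M w i j) x)
    (hN : ∀ i j, DifferentiableAt 𝕜 (fun w => N w i j) x) (i j : ι) :
    DifferentiableAt 𝕜 (fun w => (M w * N w) i j) x := by
  simp only [mul_apply]
  exact DifferentiableAt.fun_sum fun a _ => (hM i a).mul (hN a j)

variable [DecidableEq ι]

theorem hasFDerivAt_det {M' : ι → ι → F →L[𝕜] 𝔸}
    (hM : ∀ i j, HasFDerivAt (fun w => M w i j) (M' i j) x) :
    HasFDerivAt (fun w => (M w).det) (∑ i, ∑ j, (M x).adjugate i j • M' j i) x := by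
  let D : ContinuousMultilinearMap 𝕜 (fun _ : ι => ι → 𝔸) 𝔸 :=
    ⟨(detRowAlternating (R := 𝔸) (n := ι)).toMultilinearMap.restrictScalars 𝕜,
      Continuous.matrix_det (n := ι) (R := 𝔸) continuous_id⟩
  have hD := HasFDerivAt.multilinear_comp D (x := x) (g := fun j w i => M w i j)
    (g' := fun j => ContinuousLinearMap.pi fun i => M' i j)
    fun j => hasFDerivAt_pi.2 fun i => hM i j
  refine (hD.congr_of_eventuallyEq (.of_forall fun w => (det_transpose (M w)).symm)).congr_fderiv ?_
  ext v
  simp only [_root_.sum_apply, _root_.smul_apply, smul_eq_mul]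
  refine Finset.sum_congr rfl fun i _ => ?_
  have hcramer : (M x).cramer (fun j => M' j i v) i = ∑ j, (M x).adjugate i j * M' j i v := by
    rw [cramer_eq_adjugate_mulVec, mulVec, dotProduct]
  rw [← hcramer, cramer_apply, ← det_transpose, ← updateRow_transpose]
  rfl

theorem differentiableAt_det (hM : ∀ i j, DifferentiableAt 𝕜 (fun w => M w i j) x) :
    DifferentiableAt 𝕜 (fun w => (M w).det) x :=
  (hasFDerivAt_det fun i j => (hM i j).hasFDerivAt).differentiableAt

theorem differentiableAt_adjugate (hM : ∀ i j, DifferentiableAt 𝕜 (fun w => M w i j) x)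
    (i j : ι) : DifferentiableAt 𝕜 (fun w => (M w).adjugate i j) x := by
  simp only [adjugate_apply]
  refine differentiableAt_det fun a b => ?_
  rcases eq_or_ne a j with rfl | ha
  · simp
  · simpa [updateRow_ne ha] using hM a b

theorem differentiableAt_matrix_inv {𝕂 : Type*} [NormedField 𝕂] [NormedAlgebra 𝕜 𝕂]
    {M : F → Matrix ι ι 𝕂} (hM : ∀ i j, DifferentiableAt 𝕜 (fun w => M w i j) x)
    (hdet : (M x).det ≠ 0) (i j : ι) : DifferentiableAt 𝕜 (fun w => (M w)⁻¹ i j) x := by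
  simp only [inv_def, Ring.inverse_eq_inv', Matrix.smul_apply, smul_eq_mul]
  exact ((differentiableAt_det hM).inv hdet).mul (differentiableAt_adjugate hM i j)

end MatrixCalculus

section ChernCurvature

variable {ι : Type*} {M N : ℂ → Matrix ι ι ℂ} {z : ℂ}

theorem mDzbar_congr (h : M =ᶠ[𝓝 z] N) : mDzbar M z = mDzbar N z := by
  ext i j
  exact Dzbar_congr (h.mono fun w hw => congrFun₂ hw i j)

variable [Fintype ι]

theorem mDzbar_mul (hM : ∀ i j, DifferentiableAt ℝ (fun w => M w i j) z)
    (hN : ∀ i j, DifferentiableAt ℝ (fun w => N w i j) z) :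
    mDzbar (fun w => M w * N w) z = mDzbar M z * N z + M z * mDzbar N z := by
  ext i j
  simp only [mDzbar, of_apply, Matrix.add_apply, mul_apply]
  rw [Dzbar_fun_sum fun a _ => (hM i a).fun_mul (hN a j), ← Finset.sum_add_distrib]
  exact Finset.sum_congr rfl fun a _ => Dzbar_fun_mul (hM i a) (hN a j)

theorem Dzbar_trace (hM : ∀ i j, DifferentiableAt ℝ (fun w => M w i j) z) :
    Dzbar (fun w => (M w).trace) z = (mDzbar M z).trace :=
  Dzbar_fun_sum fun i _ => hM i i

variable [DecidableEq ι]

theorem Dz_det (hM : ∀ i j, DifferentiableAt ℝ (fun w => M w i j) z) :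
    Dz (fun w => (M w).det) z = ((M z).adjugate * mDz M z).trace := by
  simp only [Dz, (hasFDerivAt_det fun i j => (hM i j).hasFDerivAt).fderiv, _root_.sum_apply,
    _root_.smul_apply, smul_eq_mul, Finset.mul_sum, ← Finset.sum_sub_distrib, trace, diag_apply,
    mul_apply, mDz, of_apply]
  exact Finset.sum_congr rfl fun i _ => Finset.sum_congr rfl fun j _ => by ring

theorem Dz_log_det (hM : ∀ i j, DifferentiableAt ℝ (fun w => M w i j) z)
    (hdet : (M z).det ∈ Complex.slitPlane) :
    Dz (fun w => Complex.log (M w).det) z = ((M z)⁻¹ * mDz M z).trace := by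
  rw [Dz_log (differentiableAt_det hM) hdet, Dz_det hM, inv_def, Ring.inverse_eq_inv',
    smul_mul, trace_smul, smul_eq_mul]

/-- The coefficient matrix `∂/∂z̄ (M⁻¹ · ∂M/∂z)` of the curvature of the Chern connection of the
Hermitian metric that is given by the matrix `M` in a holomorphic frame. -/
def chernCurvature (M : ℂ → Matrix ι ι ℂ) (z : ℂ) : Matrix ι ι ℂ :=
  mDzbar (fun w => (M w)⁻¹ * mDz M w) z

theorem mul_chernCurvature (hM : ∀ i j, DifferentiableAt ℝ (fun w => M w i j) z)
    (hM' : ∀ i j, DifferentiableAt ℝ (fun w => mDz M w i j) z) (hdet : (M z).det ≠ 0) :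
    M z * chernCurvature M z =
      mDzbar (mDz M) z - mDzbar M z * ((M z)⁻¹ * mDz M z) := by
  have hcancel : (fun w => M w * ((M w)⁻¹ * mDz M w)) =ᶠ[𝓝 z] mDz M := by
    filter_upwards [(differentiableAt_det hM).continuousAt.eventually_ne hdet] with w hw
    rw [← Matrix.mul_assoc, mul_nonsing_inv _ hw.isUnit, Matrix.one_mul]
  have hconn := differentiableAt_matrix_mul (differentiableAt_matrix_inv hM hdet) hM'
  rw [← mDzbar_congr hcancel, mDzbar_mul hM hconn, add_sub_cancel_left, chernCurvature]

theorem Dzbar_Dz_log_det (hM : ∀ᶠ w in 𝓝 z, ∀ i j, DifferentiableAt ℝ (fun u => M u i j) w)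
    (hM' : ∀ i j, DifferentiableAt ℝ (fun w => mDz M w i j) z)
    (hdet : (M z).det ∈ Complex.slitPlane) :
    Dzbar (fun w => Dz (fun u => Complex.log (M u).det) w) z = (chernCurvature M z).trace := by
  have hMz := hM.self_of_nhds
  have hslit : ∀ᶠ w in 𝓝 z, (M w).det ∈ Complex.slitPlane :=
    (differentiableAt_det hMz).continuousAt.eventually_mem
      (Complex.isOpen_slitPlane.mem_nhds hdet)
  have hinv := differentiableAt_matrix_inv hMz (Complex.slitPlane_ne_zero hdet)
  rw [chernCurvature, ← Dzbar_trace (differentiableAt_matrix_mul hinv hM')]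
  refine Dzbar_congr ?_
  filter_upwards [hM, hslit] with w hMw hw
  exact Dz_log_det hMw hw

end ChernCurvature

section Gram

theorem inv_apply_last_last {K : Type*} [Field K] {n : ℕ}
    (A : Matrix (Fin (n + 1)) (Fin (n + 1)) K) :
    A⁻¹ (Fin.last n) (Fin.last n) =
      (A.submatrix Fin.castSucc Fin.castSucc).det / A.det := by
  simp [inv_def, adjugate_fin_succ_eq_det_submatrix, ← two_mul, div_eq_inv_mul]

variable {𝕜 E ι : Type*} [RCLike 𝕜] [NormedAddCommGroup E] [InnerProductSpace 𝕜 E]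
  [Fintype ι] [DecidableEq ι] {v : ι → E}

variable (𝕜) in
/-- The Schur complement `⟪x, y⟫ - ⟪x, v⟫ (gram 𝕜 v)⁻¹ ⟪v, y⟫`. For linearly independent `v` it is
the inner product of the components of `x` and `y` orthogonal to the span of `v`. -/
def gramResidual (v : ι → E) (x y : E) : 𝕜 :=
  inner 𝕜 x y -
    (fun i => inner 𝕜 x (v i)) ⬝ᵥ ((gram 𝕜 v)⁻¹ *ᵥ fun j => inner 𝕜 (v j) y)

theorem gramResidual_apply_left (hv : LinearIndependent 𝕜 v) (i : ι) (y : E) :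
    gramResidual 𝕜 v (v i) y = 0 := by
  have hunit := (det_gram_ne_zero_iff_linearIndependent.2 hv).isUnit
  have hsolve : gram 𝕜 v *ᵥ ((gram 𝕜 v)⁻¹ *ᵥ fun j => inner 𝕜 (v j) y) =
      fun j => inner 𝕜 (v j) y := by
    rw [mulVec_mulVec, mul_nonsing_inv _ hunit, one_mulVec]
  exact sub_eq_zero.2 (congrFun hsolve i).symm

theorem gramResidual_apply_right (hv : LinearIndependent 𝕜 v) (x : E) (j : ι) :
    gramResidual 𝕜 v x (v j) = 0 := by
  have hunit := (det_gram_ne_zero_iff_linearIndependent.2 hv).isUnit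
  have hsolve : ((fun i => inner 𝕜 x (v i)) ᵥ* (gram 𝕜 v)⁻¹) ᵥ* gram 𝕜 v =
      fun i => inner 𝕜 x (v i) := by
    rw [vecMul_vecMul, nonsing_inv_mul _ hunit, vecMul_one]
  rw [gramResidual, dotProduct_mulVec]
  exact sub_eq_zero.2 (congrFun hsolve j).symm

theorem det_gram_succ {n : ℕ} {v : Fin (n + 1) → E} (hv : LinearIndependent 𝕜 (Fin.init v)) :
    (gram 𝕜 v).det =
      (gram 𝕜 (Fin.init v)).det *
        gramResidual 𝕜 (Fin.init v) (v (Fin.last n)) (v (Fin.last n)) := by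
  let := (gram 𝕜 (Fin.init v)).invertibleOfIsUnitDet
    (det_gram_ne_zero_iff_linearIndependent.2 hv).isUnit
  have hblocks : (gram 𝕜 v).submatrix finSumFinEquiv finSumFinEquiv =
      fromBlocks (gram 𝕜 (Fin.init v))
        (replicateCol (Fin 1) fun i => inner 𝕜 (Fin.init v i) (v (Fin.last n)))
        (replicateRow (Fin 1) fun i => inner 𝕜 (v (Fin.last n)) (Fin.init v i))
        (of fun _ _ => inner 𝕜 (v (Fin.last n)) (v (Fin.last n))) :=
    Matrix.ext fun
      | .inl _, .inl _ => rfl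
      | .inl _, .inr 0 => rfl
      | .inr 0, .inl _ => rfl
      | .inr 0, .inr 0 => rfl
  rw [← det_submatrix_equiv_self finSumFinEquiv, hblocks, det_fromBlocks₁₁, invOf_eq_nonsing_inv,
    det_fin_one, Matrix.sub_apply, Matrix.mul_assoc]
  rfl

end Gram

section Jet

theorem hasDerivAt_iteratedDeriv {𝕜 E : Type*} [NontriviallyNormedField 𝕜]
    [NormedAddCommGroup E] [NormedSpace 𝕜 E] {f : 𝕜 → E} {x : 𝕜} {n : WithTop ℕ∞} {m : ℕ}
    (hf : ContDiffAt 𝕜 n f x) (hm : (m : WithTop ℕ∞) < n) :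
    HasDerivAt (iteratedDeriv m f) (iteratedDeriv (m + 1) f x) x := by
  have hdiff : DifferentiableAt 𝕜 (iteratedDeriv m f) x := by
    simpa only [iteratedDeriv_eq_equiv_comp, LinearIsometryEquiv.comp_differentiableAt_iff] using
      hf.differentiableAt_iteratedFDeriv hm
  simpa only [iteratedDeriv_succ] using hdiff.hasDerivAt

variable {E : Type*} [NormedAddCommGroup E] [InnerProductSpace ℂ E] {σ : ℂ → E} {z : ℂ} {n : ℕ}

/-- The derivatives `σ(z), σ′(z), …, σ^{(n-1)}(z)`, whose Gram matrix is `lG σ n z`. -/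
def jetFrame (σ : ℂ → E) (n : ℕ) (z : ℂ) : Fin n → E :=
  fun i => iteratedDeriv i σ z

theorem lG_eq_gram : lG σ n z = gram ℂ (jetFrame σ n z) := rfl

theorem differentiableAt_lG (hσ : ContDiffAt ℂ n σ z) (i j : Fin n) :
    DifferentiableAt ℝ (fun w => lG σ n w i j) z := by
  have hd (m : Fin n) : DifferentiableAt ℝ (iteratedDeriv m σ) z :=
    (hasDerivAt_iteratedDeriv hσ (mod_cast m.2)).differentiableAt.restrictScalars ℝ
  exact (hd i).inner ℂ (hd j)

theorem mDz_lG (hσ : ContDiffAt ℂ n σ z) :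
    mDz (lG σ n) z = of fun i j : Fin n => ⟪iteratedDeriv i σ z, iteratedDeriv (j + 1) σ z⟫ := by
  ext i j
  exact Dz_inner (hasDerivAt_iteratedDeriv hσ (mod_cast i.2))
    (hasDerivAt_iteratedDeriv hσ (mod_cast j.2))

theorem mDzbar_lG (hσ : ContDiffAt ℂ n σ z) :
    mDzbar (lG σ n) z =
      of fun i j : Fin n => ⟪iteratedDeriv (i + 1) σ z, iteratedDeriv j σ z⟫ := by
  ext i j
  exact Dzbar_inner (hasDerivAt_iteratedDeriv hσ (mod_cast i.2))
    (hasDerivAt_iteratedDeriv hσ (mod_cast j.2))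

theorem mDz_lG_eventuallyEq (hσ : ContDiffAt ℂ n σ z) :
    mDz (lG σ n) =ᶠ[𝓝 z] fun w =>
      of fun i j : Fin n => ⟪iteratedDeriv i σ w, iteratedDeriv (j + 1) σ w⟫ :=
  (hσ.eventually (by simp)).mono fun _ => mDz_lG

theorem differentiableAt_mDz_lG (hσ : ContDiffAt ℂ (n + 1 : ℕ) σ z) (i j : Fin n) :
    DifferentiableAt ℝ (fun w => mDz (lG σ n) w i j) z := by
  have hd {m : ℕ} (hm : m < n + 1) : DifferentiableAt ℝ (iteratedDeriv m σ) z :=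
    (hasDerivAt_iteratedDeriv hσ (mod_cast hm)).differentiableAt.restrictScalars ℝ
  have hG' := mDz_lG_eventuallyEq (hσ.of_le (mod_cast n.le_succ))
  exact ((hd (by omega)).inner ℂ (hd (by omega))).congr_of_eventuallyEq
    (hG'.mono fun w hw => congrFun₂ hw i j)

theorem mDzbar_mDz_lG (hσ : ContDiffAt ℂ (n + 1 : ℕ) σ z) :
    mDzbar (mDz (lG σ n)) z =
      of fun i j : Fin n => ⟪iteratedDeriv (i + 1) σ z, iteratedDeriv (j + 1) σ z⟫ := by
  rw [mDzbar_congr (mDz_lG_eventuallyEq (hσ.of_le (mod_cast n.le_succ)))]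
  ext i j
  exact Dzbar_inner (hasDerivAt_iteratedDeriv hσ (mod_cast (by omega)))
    (hasDerivAt_iteratedDeriv hσ (mod_cast (by omega)))

theorem det_lG_mem_slitPlane (hv : LinearIndependent ℂ (jetFrame σ n z)) :
    (lG σ n z).det ∈ Complex.slitPlane := by
  open scoped ComplexOrder in
  exact Or.inl (Complex.pos_iff.1 (posDef_gram_of_linearIndependent hv).det_pos).1

theorem det_lG_succ (hv : LinearIndependent ℂ (jetFrame σ n z)) :
    (lG σ (n + 1) z).det =
      (lG σ n z).det *
        gramResidual ℂ (jetFrame σ n z) (iteratedDeriv n σ z) (iteratedDeriv n σ z) :=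
  det_gram_succ (v := jetFrame σ (n + 1) z) hv

theorem lG_mul_chernCurvature_apply (hσ : ContDiffAt ℂ (n + 1 : ℕ) σ z)
    (hv : LinearIndependent ℂ (jetFrame σ n z)) (i j : Fin n) :
    (lG σ n z * chernCurvature (lG σ n) z) i j =
      gramResidual ℂ (jetFrame σ n z) (iteratedDeriv (i + 1) σ z)
        (iteratedDeriv (j + 1) σ z) := by
  have hσn : ContDiffAt ℂ n σ z := hσ.of_le (mod_cast n.le_succ)
  rw [mul_chernCurvature (differentiableAt_lG hσn) (differentiableAt_mDz_lG hσ)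
    (det_gram_ne_zero_iff_linearIndependent.2 hv), mDzbar_mDz_lG hσ, mDzbar_lG hσn, mDz_lG hσn]
  rfl

theorem lG_mul_chernCurvature (hσ : ContDiffAt ℂ (n + 2 : ℕ) σ z)
    (hv : LinearIndependent ℂ (jetFrame σ (n + 1) z)) :
    lG σ (n + 1) z * chernCurvature (lG σ (n + 1)) z =
      single (Fin.last n) (Fin.last n) ((lG σ (n + 2) z).det / (lG σ (n + 1) z).det) := by
  have hdet : (lG σ (n + 1) z).det ≠ 0 := det_gram_ne_zero_iff_linearIndependent.2 hv
  ext i j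
  rw [lG_mul_chernCurvature_apply hσ hv]
  induction i using Fin.lastCases with
  | cast i =>
    rw [single_apply_of_row_ne (Fin.castSucc_lt_last i).ne']
    exact gramResidual_apply_left hv i.succ _
  | last =>
    induction j using Fin.lastCases with
    | cast j =>
      rw [single_apply_of_col_ne _ _ (Fin.castSucc_lt_last j).ne']
      exact gramResidual_apply_right hv _ j.succ
    | last => rw [single_apply_same, det_lG_succ hv, mul_div_cancel_left₀ _ hdet]; rfl

theorem chernCurvature_lG (hσ : ContDiffAt ℂ (n + 2 : ℕ) σ z)
    (hv : LinearIndependent ℂ (jetFrame σ (n + 1) z)) :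
    chernCurvature (lG σ (n + 1)) z =
      (lG σ (n + 1) z)⁻¹ *
        single (Fin.last n) (Fin.last n) ((lG σ (n + 2) z).det / (lG σ (n + 1) z).det) := by
  have hunit := (det_gram_ne_zero_iff_linearIndependent.2 hv).isUnit
  rw [← lG_mul_chernCurvature hσ hv, ← Matrix.mul_assoc, lG_eq_gram, nonsing_inv_mul _ hunit,
    Matrix.one_mul]

theorem stmt16_general {k : ℕ} (hσ : ContDiffAt ℂ (k + 2 : ℕ) σ z)
    (hv : LinearIndependent ℂ (jetFrame σ (k + 1) z)) :
    (∀ i j : Fin (k + 1), (j : ℕ) < k → chernCurvature (lG σ (k + 1)) z i j = 0) ∧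
    chernCurvature (lG σ (k + 1)) z (Fin.last k) (Fin.last k) =
      Dzbar (fun w => Dz (fun u => Complex.log (lG σ (k + 1) u).det) w) z ∧
    chernCurvature (lG σ (k + 1)) z (Fin.last k) (Fin.last k) =
      (lG σ k z).det * (lG σ (k + 2) z).det / ((lG σ (k + 1) z).det) ^ 2 := by
  have hcol (i j : Fin (k + 1)) (hj : j ≠ Fin.last k) :
      chernCurvature (lG σ (k + 1)) z i j = 0 := by
    rw [chernCurvature_lG hσ hv, mul_single_apply_of_ne _ _ _ _ _ hj]
  refine ⟨fun i j hj => hcol i j (Fin.ne_of_lt hj), ?_, ?_⟩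
  · have hσ' : ContDiffAt ℂ (k + 1 : ℕ) σ z := hσ.of_le (mod_cast (k + 1).le_succ)
    have htrace : (chernCurvature (lG σ (k + 1)) z).trace =
        chernCurvature (lG σ (k + 1)) z (Fin.last k) (Fin.last k) :=
      Fintype.sum_eq_single _ fun i hi => hcol i i hi
    rw [← htrace, Dzbar_Dz_log_det ((hσ'.eventually (by simp)).mono fun _ => differentiableAt_lG)
      (differentiableAt_mDz_lG hσ) (det_lG_mem_slitPlane hv)]
  · have hminor : (lG σ (k + 1) z).submatrix Fin.castSucc Fin.castSucc = lG σ k z := rfl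
    rw [chernCurvature_lG hσ hv, mul_single_apply_same, inv_apply_last_last, hminor,
      div_mul_div_comm, sq]

end Jet

/-- Curvature of the `k`-jet bundle of a `k`-nondegenerate line bundle: with
`K := ∂/∂z̄(G_k⁻¹·∂G_k/∂z)`, all columns of `K` except the last vanish, and the bottom-right
entry equals `∂²(log det G_k)/∂z∂z̄ = det G_{k−1}·det G_{k+1}/(det G_k)²`. -/
theorem stmt16 (Ω : Set ℂ) (hΩ : IsOpen Ω) (k : ℕ) (hk : 1 ≤ k)
    (σ : ℂ → H) (hσ : DifferentiableOn ℂ σ Ω)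
    (hnd : ∀ z ∈ Ω, LinearIndependent ℂ fun i : Fin (k + 1) => iteratedDeriv (i : ℕ) σ z) :
    ∀ z ∈ Ω,
      (∀ i j : Fin (k + 1), (j : ℕ) ≤ k - 1 →
        mDzbar (fun w => (lG σ (k + 1) w)⁻¹ * mDz (lG σ (k + 1)) w) z i j = 0) ∧
      mDzbar (fun w => (lG σ (k + 1) w)⁻¹ * mDz (lG σ (k + 1)) w) z
          (Fin.last k) (Fin.last k) =
        Dzbar (fun w => Dz (fun u => Complex.log (lG σ (k + 1) u).det) w) z ∧
      mDzbar (fun w => (lG σ (k + 1) w)⁻¹ * mDz (lG σ (k + 1)) w) z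
          (Fin.last k) (Fin.last k) =
        (lG σ k z).det * (lG σ (k + 2) z).det / ((lG σ (k + 1) z).det) ^ 2 := by
  intro z hz
  have hσz : ContDiffAt ℂ (k + 2 : ℕ) σ z := (hσ.contDiffOn hΩ).contDiffAt (hΩ.mem_nhds hz)
  exact (stmt16_general hσz (hnd z hz)).imp_left fun hcol i j hj => hcol i j (by omega)
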